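/- Let δ ≥ 0 and let X be a geodesic metric space satisfying the δ-hyperbolicity four-point inequality. Let n ≥ 1, let D be a real number with D ≥ 600δ, and let x_0, x_1, …, x_n be points of X such that d(x_i, x_{i+1}) ≥ D for all 0 ≤ i ≤ n−1 and (x_{i−1} | x_{i+1})_{x_i} ≤ D/3 for all 1 ≤ i ≤ n−1. Then d(x_0, x_n) ≥ nD/4. -/

import Mathlib

/-!
Write `(a|b)_p` for the Gromov product at `p`. A bound `(x_{k-1}|x_{k+1})_{x_k} ≤ c` on consecutive
triples, together with steps longer than `2(c + δ)`, propagates to `(x₀|x_{k+1})_{x_k} ≤ c + δ`.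
Indeed, the bound for `k` gives `(x₀|x_k)_{x_{k+1}} = d(x_k, x_{k+1}) - (x₀|x_{k+1})_{x_k} > c + δ`,
so of the two products in the four-point inequality at `x_{k+1}` only `(x₀|x_{k+2})_{x_{k+1}}` can
be the small one. Hence each step increases the distance to `x₀` by its length minus at most
`2(c + δ)`.
-/

/-- The Gromov product `(x|y)_z = (d(x,z) + d(y,z) - d(x,y))/2`. -/
noncomputable def gromovProd {X : Type*} [MetricSpace X] (z x y : X) : ℝ :=
  (dist x z + dist y z - dist x y) / 2

/-- `X` satisfies the `δ`-hyperbolicity four-point inequality. -/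
def IsDeltaHyperbolic (X : Type*) [MetricSpace X] (δ : ℝ) : Prop :=
  ∀ x y z w : X, min (gromovProd w x z) (gromovProd w y z) - δ ≤ gromovProd w x y

/-- `X` is a geodesic metric space: any two points are joined by an isometric image
of a real interval. -/
def IsGeodesicSpace (X : Type*) [MetricSpace X] : Prop :=
  ∀ x y : X, ∃ f : ℝ → X, f 0 = x ∧ f (dist x y) = y ∧
    ∀ s ∈ Set.Icc (0 : ℝ) (dist x y), ∀ t ∈ Set.Icc (0 : ℝ) (dist x y),
      dist (f s) (f t) = |s - t|

section GromovProduct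

variable {X : Type*} [MetricSpace X]

theorem gromovProd_comm (z x y : X) : gromovProd z x y = gromovProd z y x := by
  unfold gromovProd
  rw [dist_comm x y, add_comm]

theorem gromovProd_self_left (z y : X) : gromovProd z z y = 0 := by
  simp [gromovProd, dist_comm]

theorem gromovProd_add_gromovProd (p x y : X) :
    gromovProd x p y + gromovProd y p x = dist x y := by
  unfold gromovProd
  rw [dist_comm y x]
  ring

theorem dist_sub_dist_eq_dist_sub_two_mul_gromovProd (p x y : X) :
    dist p y - dist p x = dist x y - 2 * gromovProd x p y := by
  unfold gromovProd
  rw [dist_comm y x]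
  ring

theorem sum_dist_sub_le_dist_of_gromovProd_le {b : ℝ} {n : ℕ} {x : ℕ → X}
    (hb : ∀ k < n, gromovProd (x k) (x 0) (x (k + 1)) ≤ b) :
    ∑ k ∈ Finset.range n, (dist (x k) (x (k + 1)) - 2 * b) ≤ dist (x 0) (x n) :=
  calc
    _ ≤ ∑ k ∈ Finset.range n, (dist (x 0) (x (k + 1)) - dist (x 0) (x k)) := by
      refine Finset.sum_le_sum fun k hk => ?_
      rw [dist_sub_dist_eq_dist_sub_two_mul_gromovProd]
      linarith [hb k (Finset.mem_range.mp hk)]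
    _ = dist (x 0) (x n) := by
      rw [Finset.sum_range_sub (fun k => dist (x 0) (x k)), dist_self, sub_zero]

end GromovProduct

namespace IsDeltaHyperbolic

variable {X : Type*} [MetricSpace X] {δ c : ℝ}

theorem nonneg [Nonempty X] (h : IsDeltaHyperbolic X δ) : 0 ≤ δ := by
  obtain ⟨p⟩ := ‹Nonempty X›
  simpa [gromovProd_self_left] using h p p p p

theorem gromovProd_le_of_lt_gromovProd (h : IsDeltaHyperbolic X δ) {w x y z : X}
    (hxy : gromovProd w x y ≤ c) (hzx : c + δ < gromovProd w z x) :
    gromovProd w z y ≤ c + δ := by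
  have hmin : min (gromovProd w z x) (gromovProd w z y) ≤ c + δ := by
    rw [gromovProd_comm w z x, gromovProd_comm w z y]
    linarith [h x y z w]
  exact (min_le_iff.mp hmin).resolve_left hzx.not_ge

theorem gromovProd_chain_le (h : IsDeltaHyperbolic X δ) (hc : 0 ≤ c) {n : ℕ} {x : ℕ → X}
    (hdist : ∀ i, i + 1 < n → 2 * (c + δ) < dist (x i) (x (i + 1)))
    (hgp : ∀ i, i + 1 < n → gromovProd (x (i + 1)) (x i) (x (i + 2)) ≤ c) :
    ∀ k < n, gromovProd (x k) (x 0) (x (k + 1)) ≤ c + δ := by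
  intro k hk
  induction k with
  | zero =>
    have : Nonempty X := ⟨x 0⟩
    rw [gromovProd_self_left]
    exact add_nonneg hc h.nonneg
  | succ k ih =>
    have hback : c + δ < gromovProd (x (k + 1)) (x 0) (x k) := by
      linarith [ih (Nat.lt_of_succ_lt hk), hdist k hk,
        gromovProd_add_gromovProd (x 0) (x k) (x (k + 1))]
    exact h.gromovProd_le_of_lt_gromovProd (hgp k hk) hback

end IsDeltaHyperbolic

theorem chain_lower_bound_general {X : Type*} [MetricSpace X] {δ c D : ℝ}
    (hhyp : IsDeltaHyperbolic X δ) (hc : 0 ≤ c) {n : ℕ} {x : ℕ → X}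
    (hdist : ∀ i < n, D ≤ dist (x i) (x (i + 1)))
    (hgp : ∀ i, i + 1 < n → gromovProd (x (i + 1)) (x i) (x (i + 2)) ≤ c) :
    n * (D - 2 * (c + δ)) ≤ dist (x 0) (x n) := by
  rcases le_or_gt D (2 * (c + δ)) with hD | hD
  · exact (mul_nonpos_of_nonneg_of_nonpos n.cast_nonneg (sub_nonpos.mpr hD)).trans dist_nonneg
  have hbase : ∀ k < n, gromovProd (x k) (x 0) (x (k + 1)) ≤ c + δ :=
    hhyp.gromovProd_chain_le hc (fun i hi => hD.trans_le (hdist i (Nat.lt_of_succ_lt hi))) hgp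
  calc
    n * (D - 2 * (c + δ)) = ∑ _k ∈ Finset.range n, (D - 2 * (c + δ)) := by
      rw [Finset.sum_const, Finset.card_range, nsmul_eq_mul]
    _ ≤ ∑ k ∈ Finset.range n, (dist (x k) (x (k + 1)) - 2 * (c + δ)) :=
      Finset.sum_le_sum fun k hk => sub_le_sub_right (hdist k (Finset.mem_range.mp hk)) _
    _ ≤ dist (x 0) (x n) := sum_dist_sub_le_dist_of_gromovProd_le hbase

/-- If `x_0, …, x_n` are points of a geodesic `δ`-hyperbolic space with consecutive
distances at least `D ≥ 600δ` and Gromov products at the intermediate points at most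
`D/3`, then `d(x_0, x_n) ≥ nD/4`. -/
theorem chain_lower_bound {X : Type*} [MetricSpace X] {δ : ℝ} (hδ : 0 ≤ δ)
    (hgeo : IsGeodesicSpace X) (hhyp : IsDeltaHyperbolic X δ)
    {n : ℕ} (hn : 1 ≤ n) {D : ℝ} (hD : 600 * δ ≤ D)
    (x : ℕ → X)
    (hdist : ∀ i, i ≤ n - 1 → D ≤ dist (x i) (x (i + 1)))
    (hgp : ∀ i, 1 ≤ i → i ≤ n - 1 → gromovProd (x i) (x (i - 1)) (x (i + 1)) ≤ D / 3) :
    (n : ℝ) * D / 4 ≤ dist (x 0) (x n) := by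
  calc
    (n : ℝ) * D / 4 = n * (D / 4) := mul_div_assoc _ _ _
    _ ≤ n * (D - 2 * (D / 3 + δ)) := by gcongr; linarith
    _ ≤ dist (x 0) (x n) :=
      chain_lower_bound_general hhyp (by linarith) (fun i hi => hdist i (Nat.le_sub_one_of_lt hi))
        fun i hi => hgp (i + 1) i.succ_pos (Nat.le_sub_one_of_lt hi)
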